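/- Let m ∈ ℕ, let Q ∈ M_m(ℤ) be symmetric, let S, A ∈ ℤ^m, and let a, b, c, d be pairwise different indices in {1,…,m}. Suppose Λ_a·Λ_b = Λ_c·Λ_d in ℚ(q,a), and suppose either (Case 1) Q_{ab} = Q_{cd} − 1 and Q_{ai} + Q_{bi} = Q_{ci} + Q_{di} − δ_{ci} − δ_{di} for all i ∈ {1,…,m}, or (Case 2) Q_{cd} = Q_{ab} − 1 and Q_{ci} + Q_{di} = Q_{ai} + Q_{bi} − δ_{ai} − δ_{bi} for all i ∈ {1,…,m}. Let Q′ be the symmetric matrix obtained from Q by exchanging the entries Q_{ab} and Q_{cd} (and correspondingly Q_{ba} and Q_{dc}), leaving all other entries unchanged. Then for every N ∈ ℕ one has F_N(Q,S,A) = F_N(Q′,S,A) in ℚ(q,a); that is, the substituted quiver generating functions of Q and Q′ coincide. -/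

import Mathlib

/-!
Put `x = q⁻²` and consider the case `Q_{ab} = Q_{cd} - 1`; the other one follows by exchanging the
two pairs. Up to a common factor, the terms of `FN Q` and `FN Q'` differ by `x^{d_a d_b}` against
`x^{d_c d_d}`. The Durfee rectangle identity (`durfee`)
`1/((x)_m (x)_n) = Σ_k x^{(m-k)(n-k)} / ((x)_k (x)_{m-k} (x)_{n-k})`
applied to the nodes `c`, `d` in `FN Q` and to the nodes `a`, `b` in `FN Q'` turns both into sums
over a dimension vector `v` and a number `k` of removed pairs, with `|v| + 2k = N` (`FN_eq_split`).
Both now carry the factor `x^{v_a v_b + v_c v_d}`. The relations on `Q` make the remaining quadratic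
form take the same value on `v + k(e_c + e_d)` and `v + k(e_a + e_b)`, and `Λ_a Λ_b = Λ_c Λ_d`
matches the monomials, so the sums agree term by term (`splitTerm_exchange`).
-/

/-!
STATEMENT 1: Permutation of off-diagonal quiver entries (Theorem 6 of
Jankowski–Kucharski–Larraguível–Noshchenko–Sułkowski) preserves the substituted
quiver generating function.

Setup: `F = ℚ(q,a)`, realized as the fraction field of the polynomial ring in two
indeterminates over ℚ, with `qv = q` and `av = a`.
`pochInv N = (q^{-2};q^{-2})_N = ∏_{i=1}^N (1 - q^{-2i})`.
`eulerForm Q d = ⟨d,d⟩_Q = Σ_{i,j} (δ_{ij} - Q_{ij}) d_i d_j`.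
`Lam Q S A i = Λ_i = (-1)^{Q_{ii}-S_i} q^{S_i-1} a^{A_i}`.
`FN Q S A N = F_N(Q,S,A)`, the degree-`N` coefficient of the substituted quiver
generating function, where `tuples (Fin m) N` is the finset of `d ∈ ℕ^m` with
`d₁+⋯+d_m = N`.
-/

open Finset

noncomputable section

/-- The field `ℚ(q,a)` of rational functions in two indeterminates over `ℚ`. -/
abbrev F : Type := FractionRing (MvPolynomial (Fin 2) ℚ)

/-- The indeterminate `q`. -/
def qv : F := algebraMap (MvPolynomial (Fin 2) ℚ) F (MvPolynomial.X 0)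

/-- The indeterminate `a`. -/
def av : F := algebraMap (MvPolynomial (Fin 2) ℚ) F (MvPolynomial.X 1)

/-- `(q^{-2};q^{-2})_N = ∏_{i=1}^N (1 - q^{-2i})`. -/
def pochInv (N : ℕ) : F := ∏ i ∈ Finset.range N, (1 - qv ^ (-(2 * ((i : ℤ) + 1))))

/-- The finset of `ι`-tuples of naturals with total sum `N`. -/
def tuples (ι : Type) [Fintype ι] [DecidableEq ι] (N : ℕ) : Finset (ι → ℕ) :=
  (Fintype.piFinset fun _ : ι => Finset.range (N + 1)).filter fun d => ∑ x, d x = N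

/-- The Euler form `⟨d,d⟩_Q = Σ_{i,j} (δ_{ij} - Q_{ij}) d_i d_j`. -/
def eulerForm {m : ℕ} (Q : Matrix (Fin m) (Fin m) ℤ) (d : Fin m → ℕ) : ℤ :=
  ∑ i, ∑ j, ((if i = j then 1 else 0) - Q i j) * (d i : ℤ) * (d j : ℤ)

/-- `Λ_i = (-1)^{Q_{ii} - S_i} q^{S_i - 1} a^{A_i}`. -/
def Lam {m : ℕ} (Q : Matrix (Fin m) (Fin m) ℤ) (S A : Fin m → ℤ) (i : Fin m) : F :=
  (-1 : F) ^ (Q i i - S i) * qv ^ (S i - 1) * av ^ (A i)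

/-- The degree-`N` coefficient of the substituted quiver generating function:
`F_N(Q,S,A) = Σ_{d∈ℕ^m, Σd=N} (-q)^{-⟨d,d⟩_Q} (∏ Λ_i^{d_i}) / (∏ (q^{-2};q^{-2})_{d_i})`. -/
def FN {m : ℕ} (Q : Matrix (Fin m) (Fin m) ℤ) (S A : Fin m → ℤ) (N : ℕ) : F :=
  ∑ d ∈ tuples (Fin m) N,
    (-qv) ^ (-(eulerForm Q d)) * (∏ i, Lam Q S A i ^ (d i)) / ∏ i, pochInv (d i)

/-! ### The Durfee rectangle identity -/

lemma qv_ne_zero : qv ≠ 0 := by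
  unfold qv
  rw [Ne, IsFractionRing.to_map_eq_zero_iff]
  exact MvPolynomial.X_ne_zero 0

lemma qv_pow_ne_one (n : ℕ) : qv ^ (n + 1) ≠ 1 := by
  intro h
  unfold qv at h
  rw [← map_pow, ← map_one (algebraMap (MvPolynomial (Fin 2) ℚ) F)] at h
  have h1 := IsFractionRing.injective (MvPolynomial (Fin 2) ℚ) F h
  -- specialize `q` to `2`
  have h2 := congrArg (MvPolynomial.eval fun _ => (2 : ℚ)) h1
  simp only [map_pow, MvPolynomial.eval_X, map_one] at h2
  exact (one_lt_pow₀ (by norm_num : (1 : ℚ) < 2) (Nat.succ_ne_zero n)).ne' h2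

/-- The base `x = q⁻²` of the `q`-Pochhammer symbols. -/
def xv : F := qv ^ (-2 : ℤ)

lemma xv_ne_zero : xv ≠ 0 := zpow_ne_zero _ qv_ne_zero

lemma pochInv_succ (n : ℕ) : pochInv (n + 1) = pochInv n * (1 - xv ^ ((n : ℤ) + 1)) := by
  unfold pochInv xv
  rw [Finset.prod_range_succ, ← zpow_mul, neg_mul]

lemma one_sub_xv_ne_zero (n : ℕ) : 1 - xv ^ ((n : ℤ) + 1) ≠ 0 := by
  intro h
  have h1 : xv ^ ((n : ℤ) + 1) = 1 := (sub_eq_zero.mp h).symm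
  unfold xv at h1
  rw [← zpow_mul, neg_mul, zpow_neg, inv_eq_one] at h1
  apply qv_pow_ne_one (2 * n + 1)
  rw [← h1, ← zpow_natCast]
  congr 1

/-- `1 / (x;x)_z`, extended by zero to negative `z`, so that its recursion `one_sub_mul_ip` holds
for every integer. -/
def ip (z : ℤ) : F := if z < 0 then 0 else (pochInv z.toNat)⁻¹

lemma ip_neg {z : ℤ} (h : z < 0) : ip z = 0 := if_pos h

lemma ip_natCast (n : ℕ) : ip n = (pochInv n)⁻¹ := by
  simp [ip]

lemma ip_zero : ip 0 = 1 := by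
  simp [ip, pochInv]

lemma one_sub_mul_ip (z : ℤ) : (1 - xv ^ z) * ip z = ip (z - 1) := by
  rcases lt_trichotomy z 0 with h | h | h
  · rw [ip_neg h, ip_neg (by omega), mul_zero]
  · subst h
    rw [ip_neg (by omega : (0 : ℤ) - 1 < 0), zpow_zero, sub_self, zero_mul]
  · obtain ⟨n, rfl⟩ : ∃ n : ℕ, z = (n : ℤ) + 1 := ⟨(z - 1).toNat, by omega⟩
    have h1 : ip ((n : ℤ) + 1) = (pochInv (n + 1))⁻¹ := by
      rw [← ip_natCast]; push_cast; rfl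
    rw [h1, add_sub_cancel_right, ip_natCast, pochInv_succ, mul_inv, mul_comm (pochInv n)⁻¹,
      mul_inv_cancel_left₀ (one_sub_xv_ne_zero n)]

/-- The summand `x^{(m-k)(n-k)} / ((x)_k (x)_{m-k} (x)_{n-k})` of the Durfee rectangle identity. -/
def durfeeTerm (m n k : ℤ) : F := xv ^ ((m - k) * (n - k)) * ip k * ip (m - k) * ip (n - k)

/-- The boundary term of the recursion in `m` for the Durfee sum. -/
def durfeeAux (m n k : ℤ) : F :=
  xv ^ ((m - k) * (n - k + 1)) * ip (k - 1) * ip (m - k) * ip (n - k)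

/-- The recursion holds termwise up to a telescoping difference. -/
lemma one_sub_mul_durfeeTerm (m n k : ℤ) :
    (1 - xv ^ m) * durfeeTerm m n k =
      durfeeTerm (m - 1) n k + (durfeeAux m n k - durfeeAux m n (k + 1)) := by
  have hm : xv ^ m = xv ^ (m - k) * xv ^ k := by
    rw [← zpow_add₀ xv_ne_zero]; congr 1; ring
  have e1 : xv ^ ((m - k) * (n - k + 1)) = xv ^ ((m - k) * (n - k)) * xv ^ (m - k) := by
    rw [← zpow_add₀ xv_ne_zero]; congr 1; ring
  have e2 : xv ^ ((m - k) * (n - k)) = xv ^ ((m - 1 - k) * (n - k)) * xv ^ (n - k) := by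
    rw [← zpow_add₀ xv_ne_zero]; congr 1; ring
  have e3 : (m - (k + 1)) * (n - (k + 1) + 1) = (m - 1 - k) * (n - k) := by ring
  have i1 := one_sub_mul_ip k
  have i2 := one_sub_mul_ip (m - k)
  have i3 := one_sub_mul_ip (n - k)
  have j2 : m - (k + 1) = m - k - 1 := by ring
  have j3 : n - (k + 1) = n - k - 1 := by ring
  have j4 : m - 1 - k = m - k - 1 := by ring
  unfold durfeeTerm durfeeAux
  rw [e3, e1, hm, add_sub_cancel_right, j2, j3, ← i1, ← i3, j4, ← i2]
  rw [j4] at e2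
  rw [e2]
  ring

/-- Durfee rectangle identity: `1/((x)_m (x)_n) = Σ_k x^{(m-k)(n-k)}/((x)_k (x)_{m-k} (x)_{n-k})`,
with any summation bound beyond `n`. -/
lemma durfee (m n K : ℕ) (hK : n < K) :
    ∑ k ∈ Finset.range K, durfeeTerm m n k = ip m * ip n := by
  induction m with
  | zero =>
    rw [Finset.sum_eq_single_of_mem 0 (Finset.mem_range.mpr (by omega))]
    · simp [durfeeTerm, ip_zero]
    · intro k _ hk
      unfold durfeeTerm
      rw [ip_neg (by push_cast; omega : ((0 : ℕ) : ℤ) - k < 0)]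
      ring
  | succ m ih =>
    apply mul_left_cancel₀ (one_sub_xv_ne_zero m)
    have hip := one_sub_mul_ip ((m : ℤ) + 1)
    rw [add_sub_cancel_right] at hip
    push_cast
    rw [← mul_assoc, hip, ← ih, Finset.mul_sum]
    simp_rw [one_sub_mul_durfeeTerm, add_sub_cancel_right]
    rw [Finset.sum_add_distrib]
    have ht := Finset.sum_range_sub' (fun k : ℕ => durfeeAux ((m : ℤ) + 1) n k) K
    push_cast at ht
    rw [ht]
    -- both ends of the telescope vanish: `ip (-1) = 0` and `ip (n - K) = 0`
    unfold durfeeAux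
    rw [ip_neg (by omega : (0 : ℤ) - 1 < 0), ip_neg (by omega : (n : ℤ) - K < 0)]
    ring

/-! ### Splitting off pairs of nodes -/

variable {m : ℕ}

/-- The dimension vector `e_p + e_r`. -/
def pairVec (p r : Fin m) : Fin m → ℕ := Pi.single p 1 + Pi.single r 1

lemma pairVec_left {p r : Fin m} (h : p ≠ r) : pairVec p r p = 1 := by
  simp [pairVec, h]

lemma pairVec_right {p r : Fin m} (h : p ≠ r) : pairVec p r r = 1 := by
  simp [pairVec, h.symm]

lemma pairVec_of_ne {p r i : Fin m} (hp : i ≠ p) (hr : i ≠ r) : pairVec p r i = 0 := by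
  simp [pairVec, hp, hr]

lemma smul_pairVec_le {p r : Fin m} (h : p ≠ r) {k : ℕ} {v : Fin m → ℕ}
    (hv : k ≤ v p ∧ k ≤ v r) : k • pairVec p r ≤ v := by
  intro i
  by_cases hp : i = p
  · subst hp; simpa [pairVec_left h] using hv.1
  by_cases hr : i = r
  · subst hr; simpa [pairVec_right h] using hv.2
  simp [pairVec_of_ne hp hr]

lemma sum_pairVec (p r : Fin m) : ∑ i, pairVec p r i = 2 := by
  simp [pairVec, Finset.sum_add_distrib]

lemma prod_eq_pair (f : Fin m → F) {p r : Fin m} (h : p ≠ r) :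
    ∏ i, f i = f p * (f r * ∏ i ∈ (Finset.univ.erase p).erase r, f i) := by
  rw [Finset.mul_prod_erase _ _ (by simp [h.symm]), Finset.mul_prod_erase _ _ (by simp)]

lemma mem_tuples {N : ℕ} {v : Fin m → ℕ} : v ∈ tuples (Fin m) N ↔ ∑ i, v i = N := by
  unfold tuples
  simp only [Finset.mem_filter, Fintype.mem_piFinset, Finset.mem_range, and_iff_right_iff_imp]
  intro h i
  have := Finset.single_le_sum (f := v) (fun _ _ => Nat.zero_le _) (Finset.mem_univ i)
  omega

/-- The Durfee rectangle identity applied to the two nodes `p`, `r` of a dimension vector: a term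
is a way of removing `k` copies of the pair. -/
lemma prod_inv_pochInv (v : Fin m → ℕ) {p r : Fin m} (h : p ≠ r) {N : ℕ}
    (hv : v ∈ tuples (Fin m) N) :
    (∏ i, pochInv (v i))⁻¹ =
      ∑ k ∈ (Finset.range (N + 1)).filter (fun k => k ≤ v p ∧ k ≤ v r),
        xv ^ (((v - k • pairVec p r) p : ℤ) * ((v - k • pairVec p r) r : ℤ)) * ip k *
          (∏ i, pochInv ((v - k • pairVec p r) i))⁻¹ := by
  have hr : v r < N + 1 := by
    have := Finset.single_le_sum (f := v) (fun _ _ => Nat.zero_le _) (Finset.mem_univ r)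
    rw [mem_tuples] at hv
    omega
  rw [← Finset.prod_inv_distrib, prod_eq_pair _ h, ← mul_assoc, ← ip_natCast, ← ip_natCast,
    ← durfee _ _ _ hr, Finset.sum_mul, Finset.sum_filter]
  refine Finset.sum_congr rfl fun k _ => ?_
  split_ifs with hk
  · have h1 : (v - k • pairVec p r) p = v p - k := by simp [pairVec_left h]
    have h2 : (v - k • pairVec p r) r = v r - k := by simp [pairVec_right h]
    have h3 : ∏ i ∈ (Finset.univ.erase p).erase r, (pochInv ((v - k • pairVec p r) i))⁻¹ =
        ∏ i ∈ (Finset.univ.erase p).erase r, (pochInv (v i))⁻¹ := by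
      refine Finset.prod_congr rfl fun i hi => ?_
      simp only [Finset.mem_erase, Finset.mem_univ, and_true] at hi
      simp [pairVec_of_ne hi.2 hi.1]
    rw [← Finset.prod_inv_distrib, prod_eq_pair _ h, h3, h1, h2, ← ip_natCast, ← ip_natCast,
      Nat.cast_sub hk.1, Nat.cast_sub hk.2]
    unfold durfeeTerm
    ring
  · unfold durfeeTerm
    rcases not_and_or.mp hk with hk | hk
    · rw [ip_neg (by omega : (v p : ℤ) - k < 0)]
      ring
    · rw [ip_neg (by omega : (v r : ℤ) - k < 0)]
      ring

/-- Reindexing by the dimension vector left after removing `k` copies of the pair `p`, `r`. The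
right-hand side does not depend on the pair. -/
lemma sum_tuples_sub (f : (Fin m → ℕ) → ℕ → F) {p r : Fin m} (h : p ≠ r) (N : ℕ) :
    ∑ v ∈ tuples (Fin m) N, ∑ k ∈ (Finset.range (N + 1)).filter (fun k => k ≤ v p ∧ k ≤ v r),
        f (v - k • pairVec p r) k =
      ∑ k ∈ Finset.range (N + 1),
        ∑ v ∈ if 2 * k ≤ N then tuples (Fin m) (N - 2 * k) else ∅, f v k := by
  simp_rw [Finset.sum_filter]
  rw [Finset.sum_comm]
  refine Finset.sum_congr rfl fun k _ => ?_
  rw [← Finset.sum_filter]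
  have hsum : ∀ v : Fin m → ℕ, ∑ i, (v + k • pairVec p r) i = ∑ i, v i + 2 * k := by
    intro v
    simp only [Pi.add_apply, Pi.smul_apply, smul_eq_mul, Finset.sum_add_distrib,
      ← Finset.mul_sum, sum_pairVec]
    ring
  have hmem : ∀ w : Fin m → ℕ,
      w ∈ (if 2 * k ≤ N then tuples (Fin m) (N - 2 * k) else ∅) ↔ ∑ i, w i + 2 * k = N := by
    intro w
    split_ifs with hk
    · rw [mem_tuples]; omega
    · simp only [Finset.notMem_empty, false_iff]; omega
  refine Finset.sum_bij' (fun v _ => v - k • pairVec p r) (fun w _ => w + k • pairVec p r)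
    ?_ ?_ ?_ ?_ ?_
  · intro v hv
    rw [Finset.mem_filter, mem_tuples] at hv
    rw [hmem, ← hsum, tsub_add_cancel_of_le (smul_pairVec_le h hv.2), hv.1]
  · intro w hw
    rw [hmem] at hw
    rw [Finset.mem_filter, mem_tuples, hsum]
    refine ⟨hw, ?_, ?_⟩
    · simp [pairVec_left h]
    · simp [pairVec_right h]
  · intro v hv
    rw [Finset.mem_filter] at hv
    exact tsub_add_cancel_of_le (smul_pairVec_le h hv.2)
  · intro w _
    exact add_tsub_cancel_right w _
  · intro v _
    rfl

/-- The summand of `FN Q S A` contributed by a dimension vector `v` together with `k` copies of the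
pair `p`, `r`, after the Durfee rectangle identity has been applied to that pair. -/
def splitTerm (Q : Matrix (Fin m) (Fin m) ℤ) (S A : Fin m → ℤ) (p r : Fin m) (v : Fin m → ℕ)
    (k : ℕ) : F :=
  (-qv) ^ (-(eulerForm Q (v + k • pairVec p r))) *
    (∏ i, Lam Q S A i ^ ((v + k • pairVec p r) i)) *
      (xv ^ ((v p : ℤ) * (v r : ℤ)) * ip k * (∏ i, pochInv (v i))⁻¹)

lemma FN_eq_split (Q : Matrix (Fin m) (Fin m) ℤ) (S A : Fin m → ℤ) {p r : Fin m} (h : p ≠ r)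
    (N : ℕ) :
    FN Q S A N = ∑ k ∈ Finset.range (N + 1),
      ∑ v ∈ if 2 * k ≤ N then tuples (Fin m) (N - 2 * k) else ∅, splitTerm Q S A p r v k := by
  rw [← sum_tuples_sub _ h]
  unfold FN
  refine Finset.sum_congr rfl fun v hv => ?_
  rw [div_eq_mul_inv, prod_inv_pochInv v h hv, Finset.mul_sum]
  refine Finset.sum_congr rfl fun k hk => ?_
  rw [Finset.mem_filter] at hk
  unfold splitTerm
  rw [tsub_add_cancel_of_le (smul_pairVec_le h hk.2)]

lemma prod_pow_add_pair (L : Fin m → F) (v : Fin m → ℕ) (k : ℕ) {p r : Fin m} (h : p ≠ r) :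
    ∏ i, L i ^ ((v + k • pairVec p r) i) = (∏ i, L i ^ v i) * (L p * L r) ^ k := by
  simp only [Pi.add_apply, pow_add, Finset.prod_mul_distrib]
  congr 1
  rw [prod_eq_pair _ h, Finset.prod_eq_one, mul_one, mul_pow]
  · simp [pairVec_left h, pairVec_right h]
  · intro i hi
    simp only [Finset.mem_erase, Finset.mem_univ, and_true] at hi
    simp [pairVec_of_ne hi.2 hi.1]

/-! ### The Euler form -/

lemma eulerForm_add_pair (Q : Matrix (Fin m) (Fin m) ℤ) (hQ : Q.IsSymm) (v : Fin m → ℕ) (k : ℕ)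
    {p r : Fin m} (h : p ≠ r) :
    eulerForm Q (v + k • pairVec p r) = eulerForm Q v
      + 2 * k * (v p + v r - ∑ i, (Q p i + Q r i) * v i)
      + k ^ 2 * (2 - Q p p - Q r r - 2 * Q p r) := by
  have hs : ∀ i j, Q i j = Q j i := fun i j => hQ.apply j i
  set w : Fin m → ℤ := fun i => (pairVec p r i : ℤ) with hw
  set M : Fin m → Fin m → ℤ := fun i j => (if i = j then 1 else 0) - Q i j with hM
  have hMs : ∀ i j, M i j = M j i := by
    intro i j; simp only [hM, hs i j, eq_comm]
  have hwsum : ∀ g : Fin m → ℤ, ∑ i, g i * w i = g p + g r := by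
    intro g
    simp [hw, pairVec, Pi.single_apply, mul_add, Finset.sum_add_distrib]
  have h2 : ∑ i, ∑ j, M i j * w i * (v j : ℤ) = ∑ j, (∑ i, M j i * w i) * (v j : ℤ) := by
    rw [Finset.sum_comm]
    refine Finset.sum_congr rfl fun j _ => ?_
    rw [Finset.sum_mul]
    exact Finset.sum_congr rfl fun i _ => by rw [hMs]
  have h1 : eulerForm Q (v + k • pairVec p r) = ∑ i, ∑ j, M i j * v i * v j
      + k * ∑ i, (∑ j, M i j * w j) * v i + k * ∑ i, ∑ j, M i j * w i * v j
      + k ^ 2 * ∑ i, (∑ j, M i j * w j) * w i := by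
    unfold eulerForm
    simp only [Finset.mul_sum, Finset.sum_mul, ← Finset.sum_add_distrib]
    refine Finset.sum_congr rfl fun i _ => Finset.sum_congr rfl fun j _ => ?_
    simp only [Pi.add_apply, Pi.smul_apply, smul_eq_mul, hM, hw]
    push_cast
    ring
  have h3 : ∑ i, (∑ j, M i j * w j) * (v i : ℤ) = v p + v r - ∑ i, (Q p i + Q r i) * v i := by
    simp only [hwsum]
    have : ∀ i, (M i p + M i r) * (v i : ℤ) = (if i = p then (v i : ℤ) else 0)
        + (if i = r then (v i : ℤ) else 0) - (Q p i + Q r i) * v i := by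
      intro i
      simp only [hM, hs i p, hs i r]
      split_ifs <;> ring
    simp only [this, Finset.sum_sub_distrib, Finset.sum_add_distrib, Finset.sum_ite_eq',
      Finset.mem_univ, if_true]
  have h4 : ∑ i, (∑ j, M i j * w j) * w i = 2 - Q p p - Q r r - 2 * Q p r := by
    simp only [hwsum]
    simp only [hM, if_true, if_neg h, if_neg h.symm, hs r p]
    ring
  rw [h1, h2, h3, h4]
  unfold eulerForm
  ring

/-- Raising the `a b` entry by one and lowering the `c d` entry by one. -/
lemma eulerForm_exchange (Q Q' : Matrix (Fin m) (Fin m) ℤ) (hQ : Q.IsSymm) {a b c d : Fin m}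
    (hab : a ≠ b) (hac : a ≠ c) (had : a ≠ d) (hbc : b ≠ c) (hbd : b ≠ d) (hcd : c ≠ d)
    (h1 : Q a b = Q c d - 1)
    (hQ' : Q' = Matrix.of fun i j =>
      if (i = a ∧ j = b) ∨ (i = b ∧ j = a) then Q c d
      else if (i = c ∧ j = d) ∨ (i = d ∧ j = c) then Q a b
      else Q i j) (v : Fin m → ℕ) :
    eulerForm Q' v = eulerForm Q v - 2 * (v a * v b) + 2 * (v c * v d) := by
  have hs : ∀ i j, Q i j = Q j i := fun i j => hQ.apply j i
  have hent : ∀ i j, Q' i j = Q i j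
      + (if i = a then if j = b then 1 else 0 else 0) + (if i = b then if j = a then 1 else 0 else 0)
      - (if i = c then if j = d then 1 else 0 else 0)
      - (if i = d then if j = c then 1 else 0 else 0) := by
    intro i j
    have := hs b a
    have := hs d c
    rw [hQ', Matrix.of_apply]
    grind
  have hind : ∀ p r : Fin m, ∑ i, ∑ j, (if i = p then if j = r then (1 : ℤ) else 0 else 0)
      * (v i : ℤ) * (v j : ℤ) = v p * v r := by
    intro p r
    rw [Finset.sum_eq_single p, Finset.sum_eq_single r]
    · simp
    · intro j _ hj; simp [hj]
    · simp
    · intro i _ hi; simp [hi]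
    · simp
  have key : eulerForm Q' v = eulerForm Q v - v a * v b - v b * v a + v c * v d + v d * v c := by
    rw [← hind a b, ← hind b a, ← hind c d, ← hind d c]
    unfold eulerForm
    simp only [← Finset.sum_add_distrib, ← Finset.sum_sub_distrib]
    refine Finset.sum_congr rfl fun i _ => Finset.sum_congr rfl fun j _ => ?_
    rw [hent]
    ring
  rw [key]
  ring

lemma xv_eq : xv = (-qv) ^ (-2 : ℤ) := by
  rw [Even.neg_zpow (by decide)]
  rfl

/-- The relations on `Q` and on `Λ` make splitting off `c d` in `Q` and splitting off `a b` in the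
exchanged matrix give the same terms. -/
lemma splitTerm_exchange (Q Q' : Matrix (Fin m) (Fin m) ℤ) (hQ : Q.IsSymm) (S A : Fin m → ℤ)
    {a b c d : Fin m}
    (hab : a ≠ b) (hac : a ≠ c) (had : a ≠ d) (hbc : b ≠ c) (hbd : b ≠ d) (hcd : c ≠ d)
    (hLam : Lam Q S A a * Lam Q S A b = Lam Q S A c * Lam Q S A d)
    (h1 : Q a b = Q c d - 1)
    (h2 : ∀ i, Q a i + Q b i =
      Q c i + Q d i - (if c = i then 1 else 0) - (if d = i then 1 else 0))
    (hQ' : Q' = Matrix.of fun i j =>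
      if (i = a ∧ j = b) ∨ (i = b ∧ j = a) then Q c d
      else if (i = c ∧ j = d) ∨ (i = d ∧ j = c) then Q a b
      else Q i j) (v : Fin m → ℕ) (k : ℕ) :
    splitTerm Q S A c d v k = splitTerm Q' S A a b v k := by
  have hs : ∀ i j, Q i j = Q j i := fun i j => hQ.apply j i
  have hL : ∀ i, Lam Q' S A i = Lam Q S A i := by
    intro i
    have : Q' i i = Q i i := by
      rw [hQ', Matrix.of_apply]
      grind
    unfold Lam
    rw [this]
  have hsum : ∑ i, (Q a i + Q b i) * (v i : ℤ) = ∑ i, (Q c i + Q d i) * (v i : ℤ) - v c - v d := by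
    have : ∀ i, (Q a i + Q b i) * (v i : ℤ) = (Q c i + Q d i) * (v i : ℤ)
        - (if c = i then (v i : ℤ) else 0) - (if d = i then (v i : ℤ) else 0) := by
      intro i
      rw [h2]
      split_ifs <;> ring
    simp only [this, Finset.sum_sub_distrib, Finset.sum_ite_eq, Finset.mem_univ, if_true]
  have hdiag : Q a a + Q b b + 2 * Q a b = Q c c + Q d d + 2 * Q c d - 2 := by
    have ha := h2 a
    have hb := h2 b
    have hc := h2 c
    have hd := h2 d
    simp only [if_neg hac.symm, if_neg had.symm, if_neg hbc.symm, if_neg hbd.symm, if_neg hcd,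
      if_neg hcd.symm, if_true] at ha hb hc hd
    linarith [hs a b, hs a c, hs a d, hs b c, hs b d, hs c d]
  have hexp : -eulerForm Q (v + k • pairVec c d) + -2 * ((v c : ℤ) * v d) =
      -eulerForm Q' (v + k • pairVec a b) + -2 * ((v a : ℤ) * v b) := by
    rw [eulerForm_exchange Q Q' hQ hab hac had hbc hbd hcd h1 hQ', eulerForm_add_pair Q hQ v k hcd,
      eulerForm_add_pair Q hQ v k hab, hsum]
    simp only [Pi.add_apply, Pi.smul_apply, smul_eq_mul, pairVec_left hab, pairVec_right hab,
      pairVec_of_ne hac.symm hbc.symm, pairVec_of_ne had.symm hbd.symm]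
    push_cast
    linear_combination (k : ℤ) ^ 2 * (-hdiag)
  have hpow : (-qv) ^ (-eulerForm Q (v + k • pairVec c d)) * xv ^ ((v c : ℤ) * v d) =
      (-qv) ^ (-eulerForm Q' (v + k • pairVec a b)) * xv ^ ((v a : ℤ) * v b) := by
    rw [xv_eq, ← zpow_mul, ← zpow_mul, ← zpow_add₀ (neg_ne_zero.mpr qv_ne_zero),
      ← zpow_add₀ (neg_ne_zero.mpr qv_ne_zero), hexp]
  unfold splitTerm
  simp only [hL]
  rw [prod_pow_add_pair _ v k hcd, prod_pow_add_pair _ v k hab, hLam]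
  linear_combination ((∏ i, Lam Q S A i ^ v i) * (Lam Q S A c * Lam Q S A d) ^ k * ip k *
    (∏ i, pochInv (v i))⁻¹) * hpow

/-- The first of the two symmetric cases. -/
lemma FN_exchange (Q Q' : Matrix (Fin m) (Fin m) ℤ) (hQ : Q.IsSymm) (S A : Fin m → ℤ)
    {a b c d : Fin m}
    (hab : a ≠ b) (hac : a ≠ c) (had : a ≠ d) (hbc : b ≠ c) (hbd : b ≠ d) (hcd : c ≠ d)
    (hLam : Lam Q S A a * Lam Q S A b = Lam Q S A c * Lam Q S A d)
    (h1 : Q a b = Q c d - 1)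
    (h2 : ∀ i, Q a i + Q b i =
      Q c i + Q d i - (if c = i then 1 else 0) - (if d = i then 1 else 0))
    (hQ' : Q' = Matrix.of fun i j =>
      if (i = a ∧ j = b) ∨ (i = b ∧ j = a) then Q c d
      else if (i = c ∧ j = d) ∨ (i = d ∧ j = c) then Q a b
      else Q i j) (N : ℕ) :
    FN Q S A N = FN Q' S A N := by
  rw [FN_eq_split Q S A hcd, FN_eq_split Q' S A hab]
  refine Finset.sum_congr rfl fun k _ => Finset.sum_congr rfl fun v _ => ?_
  exact splitTerm_exchange Q Q' hQ S A hab hac had hbc hbd hcd hLam h1 h2 hQ' v k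

theorem statement1 (m : ℕ) (Q : Matrix (Fin m) (Fin m) ℤ) (hQ : Q.IsSymm)
    (S A : Fin m → ℤ) (a b c d : Fin m)
    (hab : a ≠ b) (hac : a ≠ c) (had : a ≠ d) (hbc : b ≠ c) (hbd : b ≠ d) (hcd : c ≠ d)
    (hLam : Lam Q S A a * Lam Q S A b = Lam Q S A c * Lam Q S A d)
    (hcase :
      (Q a b = Q c d - 1 ∧
        ∀ i, Q a i + Q b i =
          Q c i + Q d i - (if c = i then 1 else 0) - (if d = i then 1 else 0)) ∨
      (Q c d = Q a b - 1 ∧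
        ∀ i, Q c i + Q d i =
          Q a i + Q b i - (if a = i then 1 else 0) - (if b = i then 1 else 0)))
    (Q' : Matrix (Fin m) (Fin m) ℤ)
    (hQ' : Q' = Matrix.of fun i j =>
      if (i = a ∧ j = b) ∨ (i = b ∧ j = a) then Q c d
      else if (i = c ∧ j = d) ∨ (i = d ∧ j = c) then Q a b
      else Q i j) :
    ∀ N : ℕ, FN Q S A N = FN Q' S A N := by
  intro N
  rcases hcase with ⟨h1, h2⟩ | ⟨h1, h2⟩
  · exact FN_exchange Q Q' hQ S A hab hac had hbc hbd hcd hLam h1 h2 hQ' N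
  · refine FN_exchange Q Q' hQ S A hcd hac.symm hbc.symm had.symm hbd.symm hab hLam.symm h1 h2 ?_ N
    -- the two exchanged pairs of positions are disjoint, so the order of the tests is irrelevant
    rw [hQ']
    ext i j
    simp only [Matrix.of_apply]
    grind

end
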